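/- For every T > 0 and every nonzero k ∈ ℤ², |1 − Ĥ_T(k)| ≥ (‖k‖²·T/4) · (1 − exp(−1/(‖k‖²·T))), where ‖k‖ denotes the Euclidean norm of k. -/

import Mathlib

open MeasureTheory Real

/-- The zeroth-order Bessel function `J⁰(k) = (1/π) ∫₀^π cos(k cos θ) dθ`. -/
noncomputable def J0 (k : ℝ) : ℝ :=
  (1 / Real.pi) * ∫ θ in (0:ℝ)..Real.pi, Real.cos (k * Real.cos θ)

/-- The Euclidean norm of `k ∈ ℤ²`. -/
noncomputable def eNorm (k : ℤ × ℤ) : ℝ :=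
  Real.sqrt ((k.1 : ℝ) ^ 2 + (k.2 : ℝ) ^ 2)

/-- The Fourier multiplier `Ĥ_T(k) = (2/T) ∫₀^∞ (J⁰(‖k‖u))² e^{-u²/T} u du`. -/
noncomputable def Hhat (T : ℝ) (k : ℤ × ℤ) : ℝ :=
  (2 / T) * ∫ u in Set.Ioi (0:ℝ), (J0 (eNorm k * u)) ^ 2 * Real.exp (-u ^ 2 / T) * u

theorem Real.cos_le_one_sub_sq_add_pow_four (y : ℝ) :
    cos y ≤ 1 - y ^ 2 / 2 + y ^ 4 / 24 := by
  wlog hy : 0 ≤ y generalizing y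
  · simpa [Even.neg_pow (by decide : Even 4)] using this (-y) (by linarith)
  have hcos : cos y = 1 - 2 * sin (y / 2) ^ 2 := by
    rw [← cos_two_mul_eq_one_sub]
    ring_nf
  rcases le_total (y ^ 2) 12 with h | h
  · have hsin := sin_ge_sub_cube (x := y / 2) (by positivity)
    have hnonneg : 0 ≤ y / 2 - (y / 2) ^ 3 / 6 := by nlinarith
    have hsq := pow_le_pow_left₀ hnonneg hsin 2
    nlinarith [sq_nonneg (y ^ 3)]
  · nlinarith [cos_le_one y]

/-- The first-order Bessel function `(1/π) ∫₀^π cos θ sin(k cos θ) dθ`. -/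
noncomputable def J1 (k : ℝ) : ℝ :=
  (1 / π) * ∫ θ in (0:ℝ)..π, cos θ * sin (k * cos θ)

theorem hasDerivAt_integral_cos_pow_mul {g g' : ℝ → ℝ} (hg : ∀ x, HasDerivAt g (g' x) x)
    (hg' : Continuous g') (hbound : ∀ x, |g' x| ≤ 1) (n : ℕ) (x : ℝ) :
    HasDerivAt (fun x => ∫ θ in (0:ℝ)..π, cos θ ^ n * g (x * cos θ))
      (∫ θ in (0:ℝ)..π, cos θ ^ (n + 1) * g' (x * cos θ)) x := by
  have hgc : Continuous g := continuous_iff_continuousAt.2 fun x => (hg x).continuousAt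
  refine (intervalIntegral.hasDerivAt_integral_of_dominated_loc_of_deriv_le
    (F := fun x θ => cos θ ^ n * g (x * cos θ))
    (F' := fun x θ => cos θ ^ (n + 1) * g' (x * cos θ)) (bound := fun _ => 1)
    Filter.univ_mem ?_ ?_ ?_ ?_ ?_ ?_).2
  · exact Filter.Eventually.of_forall fun x =>
      (by fun_prop : Continuous fun θ => cos θ ^ n * g (x * cos θ)).aestronglyMeasurable
  · exact (by fun_prop : Continuous fun θ => cos θ ^ n * g (x * cos θ)).intervalIntegrable _ _
  · exact (by fun_prop :
      Continuous fun θ => cos θ ^ (n + 1) * g' (x * cos θ)).aestronglyMeasurable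
  · refine Filter.Eventually.of_forall fun θ _ y _ => ?_
    rw [norm_mul, norm_pow, norm_eq_abs, norm_eq_abs]
    exact mul_le_one₀ (pow_le_one₀ (abs_nonneg _) (abs_cos_le_one θ)) (abs_nonneg _) (hbound _)
  · exact intervalIntegrable_const
  · refine Filter.Eventually.of_forall fun θ _ y _ => ?_
    have h := ((hg (y * cos θ)).comp y ((hasDerivAt_id y).mul_const (cos θ))).const_mul (cos θ ^ n)
    exact h.congr_deriv (by ring)

theorem hasDerivAt_J0 (x : ℝ) : HasDerivAt J0 (-J1 x) x := by
  have h := (hasDerivAt_integral_cos_pow_mul hasDerivAt_cos (by fun_prop)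
    (fun x => by simpa using abs_sin_le_one x) 0 x).const_mul (1 / π)
  have hJ0 : J0 = fun x => (1 / π) * ∫ θ in (0:ℝ)..π, cos θ ^ 0 * cos (x * cos θ) := by
    funext x
    simp [J0]
  rw [hJ0]
  exact h.congr_deriv (by simp [J1])

theorem hasDerivAt_J1 (x : ℝ) :
    HasDerivAt J1 ((1 / π) * ∫ θ in (0:ℝ)..π, cos θ ^ 2 * cos (x * cos θ)) x := by
  have h := (hasDerivAt_integral_cos_pow_mul hasDerivAt_sin continuous_cos
    abs_cos_le_one 1 x).const_mul (1 / π)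
  have hJ1 : J1 = fun x => (1 / π) * ∫ θ in (0:ℝ)..π, cos θ ^ 1 * sin (x * cos θ) := by
    funext x
    simp [J1]
  rw [hJ1]
  exact h

theorem integral_cos_mul_sin_mul_cos (x : ℝ) :
    ∫ θ in (0:ℝ)..π, cos θ * sin (x * cos θ) =
      x * ∫ θ in (0:ℝ)..π, sin θ ^ 2 * cos (x * cos θ) := by
  have hderiv (θ : ℝ) : HasDerivAt (fun θ => sin θ * sin (x * cos θ))
      (cos θ * sin (x * cos θ) - x * (sin θ ^ 2 * cos (x * cos θ))) θ := by
    have h := (hasDerivAt_sin θ).mul (((hasDerivAt_cos θ).const_mul x).sin)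
    exact h.congr_deriv (by ring)
  have h := intervalIntegral.integral_eq_sub_of_hasDerivAt (a := 0) (b := π)
    (fun θ _ => hderiv θ) (Continuous.intervalIntegrable (by fun_prop) _ _)
  rw [intervalIntegral.integral_sub
    (Continuous.intervalIntegrable (by fun_prop) _ _)
    (Continuous.intervalIntegrable (by fun_prop) _ _),
    intervalIntegral.integral_const_mul] at h
  simp only [sin_pi, sin_zero, zero_mul, sub_self] at h
  linarith

/-- Bessel's equation, in the form `x (J₀ - J₁') = J₁`. -/
theorem mul_J0_sub_deriv_J1 (x : ℝ) :
    x * (J0 x - (1 / π) * ∫ θ in (0:ℝ)..π, cos θ ^ 2 * cos (x * cos θ)) = J1 x := by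
  have h : ∫ θ in (0:ℝ)..π, sin θ ^ 2 * cos (x * cos θ) =
      (∫ θ in (0:ℝ)..π, cos (x * cos θ)) - ∫ θ in (0:ℝ)..π, cos θ ^ 2 * cos (x * cos θ) := by
    rw [← intervalIntegral.integral_sub
      (Continuous.intervalIntegrable (by fun_prop) _ _)
      (Continuous.intervalIntegrable (by fun_prop) _ _)]
    congr with θ
    rw [sin_sq]
    ring
  rw [J0, J1, integral_cos_mul_sin_mul_cos, h]
  ring

theorem antitoneOn_J0_sq_add_J1_sq :
    AntitoneOn (fun x => J0 x ^ 2 + J1 x ^ 2) (Set.Ici 0) := by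
  have hderiv (x : ℝ) := ((hasDerivAt_J0 x).pow 2).add ((hasDerivAt_J1 x).pow 2)
  refine antitoneOn_of_deriv_nonpos (convex_Ici 0)
    (fun x _ => (hderiv x).continuousAt.continuousWithinAt)
    (fun x _ => (hderiv x).differentiableAt.differentiableWithinAt) fun x hx => ?_
  rw [interior_Ici, Set.mem_Ioi] at hx
  have hode := mul_J0_sub_deriv_J1 x
  refine (hderiv x).deriv.trans_le ?_
  set d := (1 / π) * ∫ θ in (0:ℝ)..π, cos θ ^ 2 * cos (x * cos θ)
  have h : 0 ≤ J1 x * (J0 x - d) := by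
    rw [← hode]
    nlinarith [mul_nonneg hx.le (sq_nonneg (J0 x - d))]
  norm_num
  linarith

theorem integral_one_div_pi_mul_mono {f g : ℝ → ℝ} (hf : Continuous f) (hg : Continuous g)
    (hfg : ∀ θ, f θ ≤ g θ) :
    (1 / π) * ∫ θ in (0:ℝ)..π, f θ ≤ (1 / π) * ∫ θ in (0:ℝ)..π, g θ :=
  mul_le_mul_of_nonneg_left (intervalIntegral.integral_mono pi_pos.le
    (hf.intervalIntegrable _ _) (hg.intervalIntegrable _ _) hfg) (by positivity)

theorem integral_quartic_cos (a b c : ℝ) :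
    (1 / π) * ∫ θ in (0:ℝ)..π, (a + b * cos θ ^ 2 + c * cos θ ^ 4) =
      a + b / 2 + 3 * c / 8 := by
  have h4 : ∫ θ in (0:ℝ)..π, cos θ ^ 4 = 3 * π / 8 := by
    rw [integral_cos_pow (n := 2), integral_cos_sq]
    simp
    ring
  rw [intervalIntegral.integral_add (Continuous.intervalIntegrable (by fun_prop) _ _)
    (Continuous.intervalIntegrable (by fun_prop) _ _),
    intervalIntegral.integral_add (Continuous.intervalIntegrable (by fun_prop) _ _)
    (Continuous.intervalIntegrable (by fun_prop) _ _),
    intervalIntegral.integral_const_mul, intervalIntegral.integral_const_mul, h4, integral_cos_sq]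
  simp
  field_simp

theorem J0_le (x : ℝ) : J0 x ≤ 1 - x ^ 2 / 4 + x ^ 4 / 64 := by
  have h := integral_one_div_pi_mul_mono (f := fun θ => cos (x * cos θ))
    (g := fun θ => 1 + (-x ^ 2 / 2) * cos θ ^ 2 + (x ^ 4 / 24) * cos θ ^ 4)
    (by fun_prop) (by fun_prop)
    fun θ => (cos_le_one_sub_sq_add_pow_four _).trans_eq (by ring)
  rw [integral_quartic_cos] at h
  exact h.trans_eq (by ring)

theorem le_J0 (x : ℝ) : 1 - x ^ 2 / 4 ≤ J0 x := by
  have h := integral_one_div_pi_mul_mono (g := fun θ => cos (x * cos θ))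
    (f := fun θ => 1 + (-x ^ 2 / 2) * cos θ ^ 2 + 0 * cos θ ^ 4)
    (by fun_prop) (by fun_prop)
    fun θ => (one_sub_sq_div_two_le_cos (x := x * cos θ)).trans_eq' (by ring)
  rw [integral_quartic_cos] at h
  exact h.trans_eq' (by ring)

theorem J1_sq_le (x : ℝ) : J1 x ^ 2 ≤ 9 / 16 := by
  have hub := integral_one_div_pi_mul_mono (f := fun θ => cos θ * sin (x * cos θ))
    (g := fun θ => 1 / 2 + (1 / 2) * cos θ ^ 2 + 0 * cos θ ^ 4) (by fun_prop) (by fun_prop)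
    fun θ => by
      nlinarith [sq_nonneg (cos θ - sin (x * cos θ)), sin_sq_le_one (x * cos θ)]
  have hlb := integral_one_div_pi_mul_mono (g := fun θ => cos θ * sin (x * cos θ))
    (f := fun θ => -1 / 2 + (-1 / 2) * cos θ ^ 2 + 0 * cos θ ^ 4) (by fun_prop) (by fun_prop)
    fun θ => by
      nlinarith [sq_nonneg (cos θ + sin (x * cos θ)), sin_sq_le_one (x * cos θ)]
  rw [integral_quartic_cos] at hub hlb
  change J1 x ≤ _ at hub
  change _ ≤ J1 x at hlb
  nlinarith

theorem sq_div_four_le_one_sub_J0_sq {x : ℝ} (hx : x ^ 2 ≤ 1) : x ^ 2 / 4 ≤ 1 - J0 x ^ 2 := by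
  have hlb := le_J0 x
  have hsq := pow_le_pow_left₀ (by linarith) (J0_le x) 2
  have ht : (1 - x ^ 2 / 4 + x ^ 4 / 64) ^ 2 ≤ 1 - x ^ 2 / 4 := by
    obtain ⟨t, ht⟩ : ∃ t, t = x ^ 2 / 8 := ⟨_, rfl⟩
    have ht0 : 0 ≤ t := by rw [ht]; positivity
    have ht1 : t ≤ 1 / 8 := by linarith
    rw [show (1 - x ^ 2 / 4 + x ^ 4 / 64) ^ 2 = (1 - t) ^ 4 by rw [ht]; ring,
      show 1 - x ^ 2 / 4 = 1 - 2 * t by rw [ht]; ring]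
    have : (1 - t) ^ 4 = 1 - 2 * t - t * (2 - 6 * t + t ^ 2 * (4 - t)) := by ring
    have : 0 ≤ t ^ 2 * (4 - t) := mul_nonneg (sq_nonneg t) (by linarith)
    nlinarith
  linarith

theorem one_div_four_le_one_sub_J0_sq {x : ℝ} (hx : 1 ≤ x) : 1 / 4 ≤ 1 - J0 x ^ 2 := by
  rcases le_total x 2 with h | h
  · have hx1 : 1 ≤ x ^ 2 := one_le_pow₀ hx
    have hx2 : x ^ 2 ≤ 4 := by nlinarith
    have hsq := pow_le_pow_left₀ (by linarith [le_J0 x]) (J0_le x) 2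
    have hub : 1 - x ^ 2 / 4 + x ^ 4 / 64 ≤ 49 / 64 := by nlinarith
    have hlb : 0 ≤ 1 - x ^ 2 / 4 + x ^ 4 / 64 := by nlinarith [sq_nonneg (1 - x ^ 2 / 8)]
    nlinarith
  · have henergy := antitoneOn_J0_sq_add_J1_sq (a := 2) (by norm_num) (by simp; linarith) h
    have hub := J0_le 2
    have hlb := le_J0 2
    norm_num at hub hlb henergy
    nlinarith [J1_sq_le 2, sq_nonneg (J1 x)]

theorem J0_sq_le_one (x : ℝ) : J0 x ^ 2 ≤ 1 := by
  have hub := integral_one_div_pi_mul_mono (f := fun θ => cos (x * cos θ))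
    (g := fun θ => 1 + 0 * cos θ ^ 2 + 0 * cos θ ^ 4) (by fun_prop) (by fun_prop)
    fun θ => by simpa using cos_le_one _
  have hlb := integral_one_div_pi_mul_mono (g := fun θ => cos (x * cos θ))
    (f := fun θ => -1 + 0 * cos θ ^ 2 + 0 * cos θ ^ 4) (by fun_prop) (by fun_prop)
    fun θ => by simpa using neg_one_le_cos _
  rw [integral_quartic_cos] at hub hlb
  change J0 x ≤ _ at hub
  change _ ≤ J0 x at hlb
  nlinarith

theorem continuous_J0 : Continuous J0 :=
  continuous_iff_continuousAt.2 fun x => (hasDerivAt_J0 x).continuousAt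

section Gaussian

variable {T : ℝ}

theorem hasDerivAt_exp_neg_sq_div (T u : ℝ) :
    HasDerivAt (fun u => exp (-u ^ 2 / T)) (-(2 / T) * (exp (-u ^ 2 / T) * u)) u := by
  have h := ((((hasDerivAt_id u).pow 2).neg).div_const T).exp
  exact h.congr_deriv (by simp; ring)

theorem integrable_exp_neg_sq_div_mul (hT : 0 < T) :
    Integrable fun u : ℝ => exp (-u ^ 2 / T) * u := by
  refine (integrable_mul_exp_neg_mul_sq (inv_pos.2 hT)).congr
    (Filter.Eventually.of_forall fun u => ?_)
  simp only [mul_comm u]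
  congr 2
  ring

theorem integral_Ioi_exp_neg_sq_div_mul (hT : 0 < T) (b : ℝ) :
    ∫ u in Set.Ioi b, exp (-u ^ 2 / T) * u = T / 2 * exp (-b ^ 2 / T) := by
  have hderiv (u : ℝ) : HasDerivAt (fun u => -(T / 2) * exp (-u ^ 2 / T))
      (exp (-u ^ 2 / T) * u) u := by
    exact ((hasDerivAt_exp_neg_sq_div T u).const_mul (-(T / 2))).congr_deriv (by field_simp)
  have hlim : Filter.Tendsto (fun u : ℝ => -(T / 2) * exp (-u ^ 2 / T)) Filter.atTop (nhds 0) := by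
    have h : Filter.Tendsto (fun u : ℝ => u ^ 2 / T) Filter.atTop Filter.atTop :=
      (Filter.tendsto_pow_atTop two_ne_zero).atTop_div_const hT
    simpa [neg_div] using (tendsto_exp_neg_atTop_nhds_zero.comp h).const_mul (-(T / 2))
  rw [integral_Ioi_of_hasDerivAt_of_tendsto' (fun u _ => hderiv u)
    (integrable_exp_neg_sq_div_mul hT).integrableOn hlim]
  ring

theorem integral_sq_mul_exp_neg_sq_div_mul (hT : 0 < T) (b : ℝ) :
    ∫ u in (0:ℝ)..b, u ^ 2 * (exp (-u ^ 2 / T) * u) =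
      T / 2 * (T - (b ^ 2 + T) * exp (-b ^ 2 / T)) := by
  have hderiv (u : ℝ) : HasDerivAt (fun u => -(T / 2) * ((u ^ 2 + T) * exp (-u ^ 2 / T)))
      (u ^ 2 * (exp (-u ^ 2 / T) * u)) u := by
    have h := ((((hasDerivAt_id u).pow 2).add_const T).mul
      (hasDerivAt_exp_neg_sq_div T u)).const_mul (-(T / 2))
    exact h.congr_deriv (by simp; field_simp; ring)
  rw [intervalIntegral.integral_eq_sub_of_hasDerivAt (fun u _ => hderiv u)
    (Continuous.intervalIntegrable (by fun_prop) _ _)]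
  simp
  ring

theorem one_sub_integral_J0_sq_ge (hT : 0 < T) {r : ℝ} (hr : 0 < r) :
    (r ^ 2 * T / 4) * (1 - exp (-1 / (r ^ 2 * T))) ≤
      1 - (2 / T) * ∫ u in Set.Ioi (0:ℝ), J0 (r * u) ^ 2 * exp (-u ^ 2 / T) * u := by
  have hcont : Continuous fun u => J0 (r * u) ^ 2 := by
    have := continuous_J0
    fun_prop
  have hw := integrable_exp_neg_sq_div_mul hT
  have hJ : Integrable fun u => J0 (r * u) ^ 2 * (exp (-u ^ 2 / T) * u) := by
    refine hw.bdd_mul (c := 1) hcont.aestronglyMeasurable (Filter.Eventually.of_forall fun u => ?_)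
    rw [norm_eq_abs, abs_of_nonneg (sq_nonneg _)]
    exact J0_sq_le_one _
  have hg : Integrable fun u => (1 - J0 (r * u) ^ 2) * (exp (-u ^ 2 / T) * u) := by
    simp only [sub_mul, one_mul]
    exact hw.sub hJ
  have htotal : 1 - (2 / T) * ∫ u in Set.Ioi (0:ℝ), J0 (r * u) ^ 2 * exp (-u ^ 2 / T) * u =
      (2 / T) * ∫ u in Set.Ioi (0:ℝ), (1 - J0 (r * u) ^ 2) * (exp (-u ^ 2 / T) * u) := by
    simp only [sub_mul, one_mul]
    rw [integral_sub hw.integrableOn hJ.integrableOn, integral_Ioi_exp_neg_sq_div_mul hT]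
    simp only [mul_assoc]
    simp
    field_simp
  have hnear : r ^ 2 / 4 * ∫ u in (0:ℝ)..r⁻¹, u ^ 2 * (exp (-u ^ 2 / T) * u) ≤
      ∫ u in (0:ℝ)..r⁻¹, (1 - J0 (r * u) ^ 2) * (exp (-u ^ 2 / T) * u) := by
    rw [← intervalIntegral.integral_const_mul]
    refine intervalIntegral.integral_mono_on (by positivity)
      (Continuous.intervalIntegrable (by fun_prop) _ _) hg.intervalIntegrable fun u hu => ?_
    have hru : r * u ≤ 1 := by
      simpa [hr.ne'] using mul_le_mul_of_nonneg_left hu.2 hr.le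
    have h := sq_div_four_le_one_sub_J0_sq (pow_le_one₀ (mul_nonneg hr.le hu.1) hru (n := 2))
    rw [← mul_assoc]
    exact mul_le_mul_of_nonneg_right (h.trans_eq' (by ring)) (mul_nonneg (exp_nonneg _) hu.1)
  have hfar : 1 / 4 * ∫ u in Set.Ioi r⁻¹, exp (-u ^ 2 / T) * u ≤
      ∫ u in Set.Ioi r⁻¹, (1 - J0 (r * u) ^ 2) * (exp (-u ^ 2 / T) * u) := by
    rw [← integral_const_mul]
    refine setIntegral_mono_on (hw.integrableOn.const_mul _) hg.integrableOn measurableSet_Ioi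
      fun u hu => ?_
    have hu' : r⁻¹ < u := hu
    have hru : 1 ≤ r * u := by
      simpa [hr.ne'] using mul_le_mul_of_nonneg_left hu'.le hr.le
    exact mul_le_mul_of_nonneg_right (one_div_four_le_one_sub_J0_sq hru)
      (mul_nonneg (exp_nonneg _) ((inv_pos.2 hr).trans hu').le)
  rw [htotal, ← intervalIntegral.integral_interval_add_Ioi (b := r⁻¹) hg.integrableOn
    hg.integrableOn]
  refine (mul_le_mul_of_nonneg_left (add_le_add hnear hfar) (by positivity)).trans_eq' ?_
  rw [integral_sq_mul_exp_neg_sq_div_mul hT, integral_Ioi_exp_neg_sq_div_mul hT,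
    show -1 / (r ^ 2 * T) = -r⁻¹ ^ 2 / T by field_simp]
  generalize exp (-r⁻¹ ^ 2 / T) = e
  field_simp
  ring

end Gaussian

theorem eNorm_pos {k : ℤ × ℤ} (hk : k ≠ 0) : 0 < eNorm k := by
  refine sqrt_pos.2 ?_
  rcases k with ⟨a, b⟩
  have h : a ≠ 0 ∨ b ≠ 0 := by
    by_contra! h
    exact hk (Prod.ext h.1 h.2)
  rcases h with h | h <;> positivity

theorem Hhat_lower_bound (T : ℝ) (hT : 0 < T) (k : ℤ × ℤ) (hk : k ≠ 0) :
    (eNorm k ^ 2 * T / 4) * (1 - Real.exp (-1 / (eNorm k ^ 2 * T))) ≤ |1 - Hhat T k| :=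
  (one_sub_integral_J0_sq_ge hT (eNorm_pos hk)).trans (le_abs_self _)
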